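/- (Weak Freud–Levin Theorem) Suppose x₀ ∈ supp(μ) satisfies: for all δ > 0, both (x₀ − δ, x₀) ∩ supp(μ) and (x₀, x₀ + δ) ∩ supp(μ) are nonempty; w(x₀) > 0; the quantities ρ_n = (1/n) w(x₀) K_n(x₀, x₀) satisfy 0 < inf_n ρ_n ≤ sup_n ρ_n < ∞; and weak bulk universality holds at x₀, i.e., uniformly for a, b in compact subsets of ℝ, K_n(x₀ + a/(n ρ_n), x₀ + b/(n ρ_n))/K_n(x₀, x₀) → sin(π(b−a))/(π(b−a)). For each n, the zeros of p_n are real and simple; label those near x₀ as … < x_{−1}^{(n)} < x₀ ≤ x_0^{(n)} < x_1^{(n)} < … (so x_j^{(n)} for j ≥ 0 are the successive zeros of p_n that are ≥ x₀, and x_j^{(n)} for j < 0 the successive zeros < x₀). Then for each fixed j ∈ ℤ, x_j^{(n)} is defined for all sufficiently large n and lim_{n→∞} (x_{j+1}^{(n)} − x_j^{(n)})/(x_1^{(n)} − x_0^{(n)}) = 1 (quasi-clock behavior at x₀). -/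

import Mathlib

open MeasureTheory Filter Set

/-- The Christoffel–Darboux kernel `K_n(x, y) = Σ_{j=0}^n p_j(x) p_j(y)` (for real arguments,
the orthonormal polynomials being real). -/
noncomputable def CDKernel (p : ℕ → Polynomial ℝ) (n : ℕ) (x y : ℝ) : ℝ :=
  ∑ j ∈ Finset.range (n + 1), (p j).eval x * (p j).eval y

/-- The (topological) support of a measure on `ℝ`: points all of whose neighborhoods have
positive measure. -/
def measSupport (μ : Measure ℝ) : Set ℝ := {x : ℝ | ∀ U ∈ nhds x, μ U ≠ 0}

/-- `y` is the `j`-th zero of `P` relative to `x₀` (zeros assumed real and simple): for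
`j ≥ 0`, `y` is a root with `x₀ ≤ y` and exactly `j` roots lie in `[x₀, y)`; for `j < 0`, `y`
is a root with `y < x₀` and exactly `-(j+1)` roots lie in `(y, x₀)`.  This encodes the
labeling `… < x_{-1}^{(n)} < x₀ ≤ x_0^{(n)} < x_1^{(n)} < …` of the zeros near `x₀`. -/
def IsNthZero (P : Polynomial ℝ) (x₀ : ℝ) (j : ℤ) (y : ℝ) : Prop :=
  P.IsRoot y ∧
    (if 0 ≤ j then
      x₀ ≤ y ∧ (Set.ncard {t : ℝ | P.IsRoot t ∧ x₀ ≤ t ∧ t < y} : ℤ) = j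
    else
      y < x₀ ∧ (Set.ncard {t : ℝ | P.IsRoot t ∧ y < t ∧ t < x₀} : ℤ) = -(j + 1))

/-- A polynomial of degree less than `m` is a linear combination of `p 0, …, p (m - 1)` as soon
as `p j` has degree `j` for all `j`. -/
lemma exists_eq_sum_of_degree_lt {p : ℕ → Polynomial ℝ} (hdeg : ∀ n, (p n).natDegree = n)
    (hlead : ∀ n, 0 < (p n).leadingCoeff) (m : ℕ) (q : Polynomial ℝ) (hq : q.degree < m) :
    ∃ c : ℕ → ℝ, q = ∑ j ∈ Finset.range m, Polynomial.C (c j) * p j := by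
  induction m generalizing q with
  | zero =>
    refine ⟨0, ?_⟩
    simpa using hq
  | succ m ih =>
    have hcoeff : (p m).coeff m ≠ 0 := by
      have h := (hlead m).ne'
      rwa [Polynomial.leadingCoeff, hdeg] at h
    set r := q - Polynomial.C (q.coeff m / (p m).coeff m) * p m with hr
    have hrdeg : r.degree < m := by
      rw [Polynomial.degree_lt_iff_coeff_zero]
      intro k hk
      rcases hk.eq_or_lt with rfl | hk
      · simp [hr, hcoeff]
      · have h1 : q.coeff k = 0 := by
          rw [Polynomial.degree_lt_iff_coeff_zero] at hq
          exact hq k hk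
        have h2 : (p m).coeff k = 0 :=
          Polynomial.coeff_eq_zero_of_natDegree_lt (by rw [hdeg]; exact hk)
        simp [hr, h1, h2]
    obtain ⟨c, hc⟩ := ih r hrdeg
    refine ⟨Function.update c m (q.coeff m / (p m).coeff m), ?_⟩
    rw [Finset.sum_range_succ, Function.update_self]
    have : ∑ j ∈ Finset.range m, Polynomial.C
        (Function.update c m (q.coeff m / (p m).coeff m) j) * p j = r := by
      rw [hc]
      refine Finset.sum_congr rfl fun j hj => ?_
      rw [Function.update_of_ne (Finset.mem_range.1 hj).ne]
    rw [this, hr]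
    ring

/-- Polynomials that are orthonormal in the sense of the Bochner integral have all their products
integrable. -/
lemma integrable_eval_mul_eval {μ : Measure ℝ} {p : ℕ → Polynomial ℝ}
    (horth : ∀ n m : ℕ, (∫ x, (p n).eval x * (p m).eval x ∂μ) = if n = m then 1 else 0)
    (n m : ℕ) : Integrable (fun x => (p n).eval x * (p m).eval x) μ := by
  have hsq (k : ℕ) : Integrable (fun x => (p k).eval x * (p k).eval x) μ := by
    by_contra h
    have := horth k k
    rw [integral_undef h] at this
    simp at this
  refine ((hsq n).add (hsq m)).mono' (by fun_prop) (ae_of_all _ fun x => ?_)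
  rw [Real.norm_eq_abs, abs_le, Pi.add_apply]
  constructor <;> nlinarith [sq_nonneg ((p n).eval x + (p m).eval x),
    sq_nonneg ((p n).eval x - (p m).eval x), mul_self_nonneg ((p n).eval x),
    mul_self_nonneg ((p m).eval x)]

/-- The three-term recurrence. -/
lemma exists_recurrence {μ : Measure ℝ} {p : ℕ → Polynomial ℝ}
    (hdeg : ∀ n, (p n).natDegree = n) (hlead : ∀ n, 0 < (p n).leadingCoeff)
    (horth : ∀ n m : ℕ, (∫ x, (p n).eval x * (p m).eval x ∂μ) = if n = m then 1 else 0) :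
    ∃ a b : ℕ → ℝ, (∀ n, a n ≠ 0) ∧
      (∀ x, x * (p 0).eval x = a 0 * (p 1).eval x + b 0 * (p 0).eval x) ∧
      ∀ n x, x * (p (n + 1)).eval x =
        a (n + 1) * (p (n + 2)).eval x + b (n + 1) * (p (n + 1)).eval x + a n * (p n).eval x := by
  have hcoef (m k : ℕ) (c : ℕ → ℝ) :
      ∫ x, (∑ j ∈ Finset.range m, Polynomial.C (c j) * p j).eval x * (p k).eval x ∂μ =
        if k ∈ Finset.range m then c k else 0 := by
    have (x : ℝ) : (∑ j ∈ Finset.range m, Polynomial.C (c j) * p j).eval x * (p k).eval x =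
        ∑ j ∈ Finset.range m, c j * ((p j).eval x * (p k).eval x) := by
      rw [Polynomial.eval_finsetSum, Finset.sum_mul]
      simp [mul_assoc]
    simp_rw [this]
    rw [integral_finsetSum _ fun j _ => (integrable_eval_mul_eval horth j k).const_mul _]
    simp_rw [integral_const_mul, horth, mul_ite, mul_one, mul_zero, Finset.sum_ite_eq']
  have hexp (m : ℕ) (q : Polynomial ℝ) (hq : q.degree < m) :
      q = ∑ j ∈ Finset.range m, Polynomial.C (∫ x, q.eval x * (p j).eval x ∂μ) * p j := by
    obtain ⟨c, rfl⟩ := exists_eq_sum_of_degree_lt hdeg hlead m q hq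
    refine Finset.sum_congr rfl fun k hk => ?_
    rw [hcoef, if_pos hk]
  have horth_lt (m k : ℕ) (q : Polynomial ℝ) (hq : q.degree < m) (hk : m ≤ k) :
      ∫ x, q.eval x * (p k).eval x ∂μ = 0 := by
    obtain ⟨c, rfl⟩ := exists_eq_sum_of_degree_lt hdeg hlead m q hq
    rw [hcoef, if_neg (by simpa using hk)]
  have hXdeg (n : ℕ) : (Polynomial.X * p n).degree = ((n + 1 : ℕ) : WithBot ℕ) := by
    have hne : p n ≠ 0 := Polynomial.leadingCoeff_ne_zero.1 (hlead n).ne'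
    rw [Polynomial.degree_eq_natDegree (mul_ne_zero Polynomial.X_ne_zero hne),
      Polynomial.natDegree_X_mul hne, hdeg]
  let a : ℕ → ℝ := fun n => ∫ x, (Polynomial.X * p n).eval x * (p (n + 1)).eval x ∂μ
  let b : ℕ → ℝ := fun n => ∫ x, (Polynomial.X * p n).eval x * (p n).eval x ∂μ
  have ha0 (n : ℕ) : a n ≠ 0 := by
    intro h
    have h1 := hexp (n + 2) (Polynomial.X * p n) (by rw [hXdeg]; exact_mod_cast Nat.lt_succ_self _)
    rw [Finset.sum_range_succ] at h1
    change _ = _ + Polynomial.C (a n) * _ at h1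
    rw [h, map_zero, zero_mul, add_zero] at h1
    have h2 : (Polynomial.X * p n).degree < ((n + 1 : ℕ) : WithBot ℕ) := by
      rw [h1, Polynomial.degree_lt_iff_coeff_zero]
      intro k hk
      rw [Polynomial.finsetSum_coeff]
      refine Finset.sum_eq_zero fun j hj => ?_
      have := Finset.mem_range.1 hj
      rw [Polynomial.coeff_C_mul, Polynomial.coeff_eq_zero_of_natDegree_lt (by rw [hdeg]; omega),
        mul_zero]
    rw [hXdeg] at h2
    exact lt_irrefl _ h2
  refine ⟨a, b, ha0, fun x => ?_, fun n x => ?_⟩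
  · have h1 := congrArg (Polynomial.eval x)
      (hexp 2 (Polynomial.X * p 0) (by rw [hXdeg]; exact_mod_cast Nat.lt_succ_self _))
    rw [Finset.sum_range_succ, Finset.sum_range_one] at h1
    change Polynomial.eval x _ =
      Polynomial.eval x (Polynomial.C (b 0) * p 0 + Polynomial.C (a 0) * p 1) at h1
    simp only [Polynomial.eval_add, Polynomial.eval_mul, Polynomial.eval_C, Polynomial.eval_X] at h1
    linarith
  · have h1 := congrArg (Polynomial.eval x) (hexp (n + 3) (Polynomial.X * p (n + 1))
      (by rw [hXdeg]; exact_mod_cast Nat.lt_succ_self _))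
    rw [Finset.sum_range_succ, Finset.sum_range_succ, Finset.sum_range_succ] at h1
    have h0 : ∑ j ∈ Finset.range n, Polynomial.C
        (∫ x, (Polynomial.X * p (n + 1)).eval x * (p j).eval x ∂μ) * p j = 0 := by
      refine Finset.sum_eq_zero fun j hj => ?_
      have hj := Finset.mem_range.1 hj
      have := horth_lt (j + 2) (n + 1) (Polynomial.X * p j)
        (by rw [hXdeg]; exact_mod_cast Nat.lt_succ_self _) (by omega)
      have h2 : ∫ x, (Polynomial.X * p (n + 1)).eval x * (p j).eval x ∂μ = 0 := by
        rw [← this]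
        congr 1 with x
        simp only [Polynomial.eval_mul]
        ring
      rw [h2, map_zero, zero_mul]
    have ha : ∫ x, (Polynomial.X * p (n + 1)).eval x * (p n).eval x ∂μ = a n := by
      simp only [a]
      congr 1 with x
      simp only [Polynomial.eval_mul]
      ring
    rw [h0, ha, zero_add] at h1
    change Polynomial.eval x _ = Polynomial.eval x (Polynomial.C (a n) * p n +
      Polynomial.C (b (n + 1)) * p (n + 1) + Polynomial.C (a (n + 1)) * p (n + 2)) at h1
    simp only [Polynomial.eval_add, Polynomial.eval_mul, Polynomial.eval_C, Polynomial.eval_X] at h1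
    linarith

/-- The Christoffel–Darboux formula. -/
lemma exists_christoffel_darboux {μ : Measure ℝ} {p : ℕ → Polynomial ℝ}
    (hdeg : ∀ n, (p n).natDegree = n) (hlead : ∀ n, 0 < (p n).leadingCoeff)
    (horth : ∀ n m : ℕ, (∫ x, (p n).eval x * (p m).eval x ∂μ) = if n = m then 1 else 0)
    (n : ℕ) : ∃ c : ℝ, c ≠ 0 ∧ ∀ x y, CDKernel p n x y * (x - y) =
      c * ((p (n + 1)).eval x * (p n).eval y - (p n).eval x * (p (n + 1)).eval y) := by
  obtain ⟨a, b, ha, h0, hrec⟩ := exists_recurrence hdeg hlead horth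
  refine ⟨a n, ha n, fun x y => ?_⟩
  induction n with
  | zero =>
    simp only [CDKernel, zero_add, Finset.sum_range_one]
    linear_combination (p 0).eval y * h0 x - (p 0).eval x * h0 y
  | succ n ih =>
    rw [CDKernel, Finset.sum_range_succ, ← CDKernel]
    linear_combination ih + (p (n + 1)).eval y * hrec n x - (p (n + 1)).eval x * hrec n y

lemma CDKernel_self_pos {p : ℕ → Polynomial ℝ} (hdeg : ∀ n, (p n).natDegree = n)
    (hlead : ∀ n, 0 < (p n).leadingCoeff) (n : ℕ) (x : ℝ) : 0 < CDKernel p n x x := by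
  obtain ⟨d, hd⟩ := Polynomial.natDegree_eq_zero.1 (hdeg 0)
  have hd0 : d ≠ 0 := by
    rintro rfl
    simpa [← hd] using hlead 0
  refine Finset.sum_pos' (fun j _ => mul_self_nonneg _) ⟨0, by simp, ?_⟩
  rw [← hd, Polynomial.eval_C]
  exact mul_self_pos.2 hd0

lemma continuous_CDKernel (p : ℕ → Polynomial ℝ) (n : ℕ) (x : ℝ) :
    Continuous fun y => CDKernel p n x y := by
  unfold CDKernel
  fun_prop

section ChristoffelDarboux

variable {p : ℕ → Polynomial ℝ} {n : ℕ} {c : ℝ}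

/-- The confluent form of the Christoffel–Darboux formula. -/
lemma CDKernel_self_eq
    (hCD : ∀ x y, CDKernel p n x y * (x - y) =
      c * ((p (n + 1)).eval x * (p n).eval y - (p n).eval x * (p (n + 1)).eval y)) (x : ℝ) :
    CDKernel p n x x = c * ((p (n + 1)).derivative.eval x * (p n).eval x -
      (p n).derivative.eval x * (p (n + 1)).eval x) := by
  have h : (∑ j ∈ Finset.range (n + 1), Polynomial.C ((p j).eval x) * p j) *
      (Polynomial.C x - Polynomial.X) = Polynomial.C c *
        (Polynomial.C ((p (n + 1)).eval x) * p n - Polynomial.C ((p n).eval x) * p (n + 1)) := by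
    refine Polynomial.funext fun y => ?_
    have := hCD x y
    rw [CDKernel] at this
    simpa [Polynomial.eval_finsetSum] using this
  have h' := congrArg (fun q => Polynomial.eval x (Polynomial.derivative q)) h
  simp [Polynomial.eval_finsetSum, Polynomial.derivative_mul] at h'
  rw [CDKernel]
  linarith

lemma CDKernel_eq_zero_of_isRoot
    (hCD : ∀ x y, CDKernel p n x y * (x - y) =
      c * ((p (n + 1)).eval x * (p n).eval y - (p n).eval x * (p (n + 1)).eval y))
    {x y : ℝ} (hx : (p n).IsRoot x) (hy : (p n).IsRoot y) (hxy : x ≠ y) :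
    CDKernel p n x y = 0 := by
  have h := hCD x y
  rw [hx.eq_zero, hy.eq_zero] at h
  simpa [sub_ne_zero.2 hxy] using h

lemma isRoot_of_CDKernel_eq_zero (hc : c ≠ 0)
    (hCD : ∀ x y, CDKernel p n x y * (x - y) =
      c * ((p (n + 1)).eval x * (p n).eval y - (p n).eval x * (p (n + 1)).eval y))
    {x y : ℝ} (hpos : 0 < CDKernel p n x x) (hx : (p n).IsRoot x) (hxy : CDKernel p n x y = 0) :
    (p n).IsRoot y := by
  have hne : (p (n + 1)).eval x ≠ 0 := by
    intro h
    rw [CDKernel_self_eq hCD, h, hx.eq_zero] at hpos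
    simp at hpos
  have h := hCD x y
  rw [hxy, hx.eq_zero] at h
  simpa [hc, hne] using h

/-- Between two points whose Christoffel–Darboux kernel vanishes there is a zero of `p n`. -/
lemma exists_isRoot_of_CDKernel_eq_zero (hc : c ≠ 0)
    (hCD : ∀ x y, CDKernel p n x y * (x - y) =
      c * ((p (n + 1)).eval x * (p n).eval y - (p n).eval x * (p (n + 1)).eval y))
    (hpos : ∀ x, 0 < CDKernel p n x x)
    {x y : ℝ} (hlt : x < y) (hxy : CDKernel p n x y = 0) :
    ∃ z ∈ Icc x y, (p n).IsRoot z := by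
  by_contra! hno
  have hne : ∀ z ∈ Icc x y, (p n).eval z ≠ 0 := hno
  obtain ⟨z, hz, hz'⟩ := exists_hasDerivAt_eq_zero
    (f := fun z => (p (n + 1)).eval z / (p n).eval z) hlt
    ((p (n + 1)).continuous.continuousOn.div (p n).continuous.continuousOn hne) (by
      have h := hCD x y
      rw [hxy, zero_mul, eq_comm, mul_eq_zero_iff_left hc] at h
      rw [div_eq_div_iff (hne x ⟨le_rfl, hlt.le⟩) (hne y ⟨hlt.le, le_rfl⟩)]
      linarith)
    (fun z hz => ((p (n + 1)).hasDerivAt z).div ((p n).hasDerivAt z) (hne z ⟨hz.1.le, hz.2.le⟩))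
  have h0 := hne z ⟨hz.1.le, hz.2.le⟩
  have h1 := hpos z
  rw [div_eq_zero_iff, or_iff_left (pow_ne_zero 2 h0)] at hz'
  rw [CDKernel_self_eq hCD, mul_comm (Polynomial.eval z (Polynomial.derivative (p n))), hz'] at h1
  simp at h1

end ChristoffelDarboux

section Sinc

lemma sinc_pi_mul_pos {u : ℝ} (hu0 : 0 ≤ u) (hu1 : u < 1) : 0 < Real.sinc (Real.pi * u) := by
  rcases hu0.eq_or_lt with rfl | hu0
  · simp
  · have hpos : 0 < Real.pi * u := by positivity
    rw [Real.sinc_of_ne_zero hpos.ne']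
    exact div_pos (Real.sin_pos_of_pos_of_lt_pi hpos (by nlinarith [Real.pi_pos])) hpos

lemma sinc_pi_mul_one_add_neg {ε : ℝ} (hε0 : 0 < ε) (hε1 : ε < 1) :
    Real.sinc (Real.pi * (1 + ε)) < 0 := by
  have hpos : 0 < Real.pi * (1 + ε) := by positivity
  rw [Real.sinc_of_ne_zero hpos.ne']
  refine div_neg_of_neg_of_pos ?_ hpos
  rw [show Real.pi * (1 + ε) = Real.pi * ε + Real.pi by ring, Real.sin_add_pi, neg_lt_zero]
  exact Real.sin_pos_of_pos_of_lt_pi (by positivity) (by nlinarith [Real.pi_pos])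

lemma exists_sinc_gap {ε : ℝ} (hε0 : 0 < ε) (hε1 : ε < 1) :
    ∃ η > 0, (∀ u ∈ Icc 0 (1 - ε), η ≤ Real.sinc (Real.pi * u)) ∧
      Real.sinc (Real.pi * (1 + ε)) ≤ -η := by
  obtain ⟨v, hv, hmin⟩ := isCompact_Icc.exists_isMinOn (nonempty_Icc.2 (by linarith : 0 ≤ 1 - ε))
    (Real.continuous_sinc.comp (continuous_const_mul Real.pi)).continuousOn
  refine ⟨min (Real.sinc (Real.pi * v)) (-Real.sinc (Real.pi * (1 + ε))), ?_, ?_, ?_⟩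
  · exact lt_min (sinc_pi_mul_pos hv.1 (by linarith [hv.2]))
      (neg_pos.2 (sinc_pi_mul_one_add_neg hε0 hε1))
  · exact fun u hu => (min_le_left _ _).trans (hmin hu)
  · linarith [min_le_right (Real.sinc (Real.pi * v)) (-Real.sinc (Real.pi * (1 + ε)))]

variable {k : ℝ → ℝ → ℝ} {ε η M : ℝ}

/-- A continuous kernel close to the sine kernel vanishes near `(a, a + 1)`. -/
lemma exists_kernel_eq_zero (hcont : ∀ a, Continuous (k a)) (hε0 : 0 < ε) (hε1 : ε < 1)
    (hη : ∀ u ∈ Icc 0 (1 - ε), η ≤ Real.sinc (Real.pi * u))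
    (hη' : Real.sinc (Real.pi * (1 + ε)) ≤ -η)
    (happrox : ∀ a ∈ Icc (-(M + 2)) (M + 2), ∀ b ∈ Icc (-(M + 2)) (M + 2),
      |k a b - Real.sinc (Real.pi * (b - a))| < η)
    {a : ℝ} (ha : |a| ≤ M) : ∃ b ∈ Ioo (a + (1 - ε)) (a + (1 + ε)), k a b = 0 := by
  obtain ⟨ha1, ha2⟩ := abs_le.1 ha
  have hmem : a ∈ Icc (-(M + 2)) (M + 2) := ⟨by linarith, by linarith⟩
  have h1 := abs_lt.1 (happrox a hmem (a + (1 - ε)) ⟨by linarith, by linarith⟩)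
  have h2 := abs_lt.1 (happrox a hmem (a + (1 + ε)) ⟨by linarith, by linarith⟩)
  rw [add_sub_cancel_left] at h1 h2
  have h3 := hη (1 - ε) ⟨by linarith, le_rfl⟩
  obtain ⟨b, hb, hb'⟩ := intermediate_value_Ioo' (by linarith : a + (1 - ε) ≤ a + (1 + ε))
    (hcont a).continuousOn (show (0 : ℝ) ∈ Ioo _ _ from ⟨by linarith [h2.2], by linarith [h1.1]⟩)
  exact ⟨b, hb, hb'⟩

/-- If the zeros of `k a` are the points of `Z` other than `a` for every `a ∈ Z`, and `k` is close
to the sine kernel, then consecutive points of `Z` are at distance close to `1`. -/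
lemma exists_isLeast_of_kernel {Z : Set ℝ} (hZ : Z.Finite) (hcont : ∀ a, Continuous (k a))
    (hzero : ∀ a ∈ Z, ∀ b ∈ Z, a ≠ b → k a b = 0) (hmem : ∀ a ∈ Z, ∀ b, k a b = 0 → b ∈ Z)
    (hε0 : 0 < ε) (hε1 : ε < 1)
    (hη : ∀ u ∈ Icc 0 (1 - ε), η ≤ Real.sinc (Real.pi * u))
    (hη' : Real.sinc (Real.pi * (1 + ε)) ≤ -η)
    (happrox : ∀ a ∈ Icc (-(M + 2)) (M + 2), ∀ b ∈ Icc (-(M + 2)) (M + 2),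
      |k a b - Real.sinc (Real.pi * (b - a))| < η)
    {a : ℝ} (haZ : a ∈ Z) (ha : |a| ≤ M) :
    ∃ b, IsLeast {t | t ∈ Z ∧ a < t} b ∧ |b - a - 1| ≤ ε := by
  obtain ⟨b₀, hb₀, hkb₀⟩ := exists_kernel_eq_zero hcont hε0 hε1 hη hη' happrox ha
  obtain ⟨b, hbl⟩ : ∃ b, IsLeast {t | t ∈ Z ∧ a < t} b :=
    exists_min_image _ id (hZ.subset fun t ht => ht.1)
      ⟨b₀, hmem a haZ b₀ hkb₀, by linarith [hb₀.1]⟩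
  have hle : b ≤ b₀ := hbl.2 ⟨hmem a haZ b₀ hkb₀, by linarith [hb₀.1]⟩
  obtain ⟨hbZ, hab⟩ := hbl.1
  obtain ⟨ha1, ha2⟩ := abs_le.1 ha
  refine ⟨b, hbl, abs_le.2 ⟨?_, by linarith [hb₀.2]⟩⟩
  by_contra! hlt
  have h1 := abs_lt.1 (happrox a ⟨by linarith, by linarith⟩ b ⟨by linarith, by linarith⟩)
  rw [hzero a haZ b hbZ hab.ne] at h1
  linarith [h1.1, hη (b - a) ⟨by linarith, by linarith⟩]

end Sinc

section Labeling

/-- The successor of `a` among the real roots of `P`. -/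
noncomputable def nextRoot (P : Polynomial ℝ) (a : ℝ) : ℝ := sInf {t | P.IsRoot t ∧ a < t}

/-- The predecessor of `a` among the real roots of `P`. -/
noncomputable def prevRoot (P : Polynomial ℝ) (a : ℝ) : ℝ := sSup {t | P.IsRoot t ∧ t < a}

/-- The real roots of `P` labeled relative to `x₀`. -/
noncomputable def labeledRoot (P : Polynomial ℝ) (x₀ : ℝ) : ℤ → ℝ
  | .ofNat k => (nextRoot P)^[k] (sInf {t | P.IsRoot t ∧ x₀ ≤ t})
  | .negSucc k => (prevRoot P)^[k + 1] (sInf {t | P.IsRoot t ∧ x₀ ≤ t})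

lemma labeledRoot_zero (P : Polynomial ℝ) (x₀ : ℝ) :
    labeledRoot P x₀ 0 = sInf {t | P.IsRoot t ∧ x₀ ≤ t} := rfl

lemma labeledRoot_add_one (P : Polynomial ℝ) (x₀ : ℝ) (k : ℕ) :
    labeledRoot P x₀ (k + 1) = nextRoot P (labeledRoot P x₀ k) :=
  Function.iterate_succ_apply' (nextRoot P) k _

lemma labeledRoot_neg_sub_one (P : Polynomial ℝ) (x₀ : ℝ) (k : ℕ) :
    labeledRoot P x₀ (-k - 1) = prevRoot P (labeledRoot P x₀ (-k)) := by
  have h (k : ℕ) : labeledRoot P x₀ (-k) =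
      (prevRoot P)^[k] (sInf {t | P.IsRoot t ∧ x₀ ≤ t}) := by
    cases k <;> rfl
  have h1 : (-k - 1 : ℤ) = -((k + 1 : ℕ) : ℤ) := by push_cast; ring
  rw [h1, h, h, Function.iterate_succ_apply']

variable {P : Polynomial ℝ} {x₀ y z : ℝ} {i : ℤ}

lemma isNthZero_zero_of_isLeast (hy : IsLeast {t | P.IsRoot t ∧ x₀ ≤ t} y) :
    IsNthZero P x₀ 0 y := by
  refine ⟨hy.1.1, ?_⟩
  rw [if_pos le_rfl]
  refine ⟨hy.1.2, ?_⟩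
  have : {t : ℝ | P.IsRoot t ∧ x₀ ≤ t ∧ t < y} = ∅ :=
    eq_empty_of_forall_notMem fun t ht => (hy.2 ⟨ht.1, ht.2.1⟩).not_gt ht.2.2
  rw [this, ncard_empty, Nat.cast_zero]

lemma IsNthZero.add_one (hP : P ≠ 0) (hi : 0 ≤ i) (hy : IsNthZero P x₀ i y)
    (hz : IsLeast {t | P.IsRoot t ∧ y < t} z) : IsNthZero P x₀ (i + 1) z := by
  obtain ⟨hyr, hy⟩ := hy
  rw [if_pos hi] at hy
  obtain ⟨⟨hzr, hyz⟩, hmin⟩ := hz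
  refine ⟨hzr, ?_⟩
  rw [if_pos (by omega)]
  refine ⟨hy.1.trans hyz.le, ?_⟩
  have hset : {t : ℝ | P.IsRoot t ∧ x₀ ≤ t ∧ t < z} =
      insert y {t : ℝ | P.IsRoot t ∧ x₀ ≤ t ∧ t < y} := by
    ext t
    simp only [mem_ofPred_eq, mem_insert_iff]
    constructor
    · rintro ⟨h1, h2, h3⟩
      rcases lt_trichotomy t y with h | h | h
      · exact Or.inr ⟨h1, h2, h⟩
      · exact Or.inl h
      · exact absurd h3 (hmin ⟨h1, h⟩).not_gt
    · rintro (rfl | ⟨h1, h2, h3⟩)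
      · exact ⟨hyr, hy.1, hyz⟩
      · exact ⟨h1, h2, h3.trans hyz⟩
  rw [hset, ncard_insert_of_notMem (by simp)
    ((Polynomial.finite_setOfPred_isRoot hP).subset fun t ht => ht.1)]
  push_cast
  rw [hy.2]

lemma IsNthZero.sub_one (hP : P ≠ 0) (hi : i ≤ 0) (hy : IsNthZero P x₀ i y)
    (hz : IsGreatest {t | P.IsRoot t ∧ t < y} z) : IsNthZero P x₀ (i - 1) z := by
  have hfin : {t | P.IsRoot t}.Finite := Polynomial.finite_setOfPred_isRoot hP
  obtain ⟨hyr, hy⟩ := hy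
  obtain ⟨⟨hzr, hzy⟩, hmax⟩ := hz
  refine ⟨hzr, ?_⟩
  rw [if_neg (by omega)]
  rcases hi.eq_or_lt with rfl | hi
  · rw [if_pos le_rfl] at hy
    have hempty : {t : ℝ | P.IsRoot t ∧ x₀ ≤ t ∧ t < y} = ∅ :=
      (ncard_eq_zero (hfin.subset fun t ht => ht.1)).1 (by exact_mod_cast hy.2)
    have hset : {t : ℝ | P.IsRoot t ∧ z < t ∧ t < x₀} = ∅ :=
      eq_empty_of_forall_notMem fun t ht =>
        (hmax ⟨ht.1, ht.2.2.trans_le hy.1⟩).not_gt ht.2.1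
    refine ⟨?_, by rw [hset, ncard_empty]; rfl⟩
    by_contra! h
    exact eq_empty_iff_forall_notMem.1 hempty z ⟨hzr, h, hzy⟩
  · rw [if_neg (by omega)] at hy
    refine ⟨hzy.trans hy.1, ?_⟩
    have hset : {t : ℝ | P.IsRoot t ∧ z < t ∧ t < x₀} =
        insert y {t : ℝ | P.IsRoot t ∧ y < t ∧ t < x₀} := by
      ext t
      simp only [mem_ofPred_eq, mem_insert_iff]
      constructor
      · rintro ⟨h1, h2, h3⟩
        rcases lt_trichotomy t y with h | h | h
        · exact absurd h2 (hmax ⟨h1, h⟩).not_gt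
        · exact Or.inl h
        · exact Or.inr ⟨h1, h, h3⟩
      · rintro (rfl | ⟨h1, h2, h3⟩)
        · exact ⟨hyr, hzy, hy.1⟩
        · exact ⟨h1, hzy.trans h2, h3⟩
    rw [hset, ncard_insert_of_notMem (by simp) (hfin.subset fun t ht => ht.1)]
    push_cast
    rw [hy.2]
    ring

end Labeling

section Universality

variable {p : ℕ → Polynomial ℝ} {x₀ : ℝ} {s : ℕ → ℝ}

/-- Under universality at scale `s`, the neighbors of a zero of `p n` that is `O(1 / s n)`-close to
`x₀` lie at distance `(1 + o(1)) / s n` from it. -/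
lemma eventually_exists_neighbors (hp : ∀ n, p n ≠ 0) (hpos : ∀ n x, 0 < CDKernel p n x x)
    (hCD : ∀ n, ∃ c : ℝ, c ≠ 0 ∧ ∀ x y, CDKernel p n x y * (x - y) =
      c * ((p (n + 1)).eval x * (p n).eval y - (p n).eval x * (p (n + 1)).eval y))
    (hs : ∀ᶠ n in atTop, 0 < s n)
    (huniv : ∀ A : ℝ, 0 < A → TendstoUniformlyOn
      (fun (n : ℕ) (ab : ℝ × ℝ) =>
        CDKernel p n (x₀ + ab.1 / s n) (x₀ + ab.2 / s n) / CDKernel p n x₀ x₀)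
      (fun ab => Real.sinc (Real.pi * (ab.2 - ab.1))) atTop (Icc (-A) A ×ˢ Icc (-A) A))
    {M ε : ℝ} (hM : 0 ≤ M) (hε0 : 0 < ε) (hε1 : ε < 1) :
    ∀ᶠ n in atTop,
      (∃ b, IsLeast {t | (p n).IsRoot t ∧ x₀ ≤ t} b ∧ |s n * (b - x₀)| ≤ 2) ∧
      ∀ a, (p n).IsRoot a → |s n * (a - x₀)| ≤ M →
        (∃ b, IsLeast {t | (p n).IsRoot t ∧ a < t} b ∧ |s n * (b - a) - 1| ≤ ε) ∧
        ∃ b, IsGreatest {t | (p n).IsRoot t ∧ t < a} b ∧ |s n * (a - b) - 1| ≤ ε := by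
  obtain ⟨η, hη0, hη, hη'⟩ := exists_sinc_gap hε0 hε1
  filter_upwards [hs, Metric.tendstoUniformlyOn_iff.1 (huniv (M + 2) (by linarith)) η hη0]
    with n hsn hun
  obtain ⟨c, hc, hCDn⟩ := hCD n
  set k : ℝ → ℝ → ℝ := fun a b =>
    CDKernel p n (x₀ + a / s n) (x₀ + b / s n) / CDKernel p n x₀ x₀ with hk
  set Z : Set ℝ := {t | (p n).IsRoot (x₀ + t / s n)} with hZ
  have hfin : {t | (p n).IsRoot t}.Finite := Polynomial.finite_setOfPred_isRoot (hp n)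
  have hinj (a b : ℝ) : x₀ + a / s n = x₀ + b / s n → a = b := fun h => by
    rwa [add_right_inj, div_left_inj' hsn.ne'] at h
  have hZfin : Z.Finite := hfin.preimage fun a _ b _ h => hinj a b h
  have hcont (a : ℝ) : Continuous (k a) :=
    ((continuous_CDKernel p n _).comp (by fun_prop)).div_const _
  have hkiff (a b : ℝ) : k a b = 0 ↔ CDKernel p n (x₀ + a / s n) (x₀ + b / s n) = 0 := by
    rw [hk]
    simp [(hpos n x₀).ne']
  have hzero : ∀ a ∈ Z, ∀ b ∈ Z, a ≠ b → k a b = 0 := fun a ha b hb hab =>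
    (hkiff a b).2 (CDKernel_eq_zero_of_isRoot hCDn ha hb fun h => hab (hinj a b h))
  have hmem : ∀ a ∈ Z, ∀ b, k a b = 0 → b ∈ Z := fun a ha b hab =>
    isRoot_of_CDKernel_eq_zero hc hCDn (hpos n _) ha ((hkiff a b).1 hab)
  have happrox : ∀ a ∈ Icc (-(M + 2)) (M + 2), ∀ b ∈ Icc (-(M + 2)) (M + 2),
      |k a b - Real.sinc (Real.pi * (b - a))| < η := fun a ha b hb => by
    have := hun (a, b) ⟨ha, hb⟩
    rwa [dist_comm, Real.dist_eq] at this
  have hscale (t : ℝ) : x₀ + s n * (t - x₀) / s n = t := by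
    rw [mul_div_cancel_left₀ _ hsn.ne']
    ring
  have hZscale (t : ℝ) : s n * (t - x₀) ∈ Z ↔ (p n).IsRoot t := by
    rw [hZ, mem_ofPred_eq, hscale]
  refine ⟨?_, fun a ha haM => ⟨?_, ?_⟩⟩
  · obtain ⟨b, hb, hkb⟩ := exists_kernel_eq_zero hcont hε0 hε1 hη hη' happrox
      (a := 0) (by simpa using hM)
    have hb0 : 0 < b / s n := div_pos (by linarith [hb.1]) hsn
    obtain ⟨z, hz, hzr⟩ := exists_isRoot_of_CDKernel_eq_zero (x := x₀) (y := x₀ + b / s n)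
      hc hCDn (hpos n) (by linarith) (by simpa using (hkiff 0 b).1 hkb)
    obtain ⟨y, hyl⟩ : ∃ y, IsLeast {t | (p n).IsRoot t ∧ x₀ ≤ t} y :=
      exists_min_image _ id (hfin.subset fun t ht => ht.1) ⟨z, hzr, hz.1⟩
    have hyz : y ≤ z := hyl.2 ⟨hzr, hz.1⟩
    have hy0 : 0 ≤ y - x₀ := sub_nonneg.2 hyl.1.2
    refine ⟨y, hyl, ?_⟩
    rw [abs_of_nonneg (by positivity)]
    calc s n * (y - x₀) ≤ s n * (b / s n) := by
          gcongr
          linarith [hz.2]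
      _ = b := mul_div_cancel₀ _ hsn.ne'
      _ ≤ 2 := by linarith [hb.2]
  · obtain ⟨b, hb, hbε⟩ := exists_isLeast_of_kernel hZfin hcont hzero hmem hε0 hε1 hη hη' happrox
      ((hZscale a).2 ha) haM
    have hab : s n * (x₀ + b / s n - x₀) = b := by
      rw [add_sub_cancel_left, mul_div_cancel₀ _ hsn.ne']
    refine ⟨x₀ + b / s n, ⟨⟨hb.1.1, ?_⟩, ?_⟩, ?_⟩
    · have h := hb.1.2
      rw [← hab] at h
      linarith [lt_of_mul_lt_mul_left h hsn.le]
    · rintro t ⟨ht, hat⟩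
      have h := hb.2 ⟨(hZscale t).2 ht, (by gcongr : s n * (a - x₀) < s n * (t - x₀))⟩
      rw [← hab] at h
      linarith [le_of_mul_le_mul_left h hsn]
    · convert hbε using 2
      linear_combination hab
  · obtain ⟨b, hb, hbε⟩ := exists_isLeast_of_kernel (k := fun a b => k (-a) (-b)) (Z := -Z)
      (M := M) (a := -(s n * (a - x₀)))
      hZfin.neg (fun a => (hcont (-a)).comp continuous_neg)
      (fun a ha b hb hab => hzero _ ha _ hb (by simpa using hab))
      (fun a ha b hab => hmem _ ha _ hab) hε0 hε1 hη hη'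
      (fun a ha b hb => by
        have h := happrox (-a) ⟨by linarith [ha.2], by linarith [ha.1]⟩ (-b)
          ⟨by linarith [hb.2], by linarith [hb.1]⟩
        rwa [← Real.sinc_neg, show -(Real.pi * (-b - -a)) = Real.pi * (b - a) by ring] at h)
      (by simpa using (hZscale a).2 ha) (by rwa [abs_neg])
    have hab : s n * (x₀ + -b / s n - x₀) = -b := by
      rw [add_sub_cancel_left, mul_div_cancel₀ _ hsn.ne']
    refine ⟨x₀ + -b / s n, ⟨⟨hb.1.1, ?_⟩, ?_⟩, ?_⟩
    · have h : s n * (x₀ + -b / s n - x₀) < s n * (a - x₀) := by linarith [hb.1.2]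
      linarith [lt_of_mul_lt_mul_left h hsn.le]
    · rintro t ⟨ht, hat⟩
      have h := hb.2 ⟨(by simpa using (hZscale t).2 ht : -(s n * (t - x₀)) ∈ -Z),
        neg_lt_neg (by gcongr : s n * (t - x₀) < s n * (a - x₀))⟩
      have h' : s n * (t - x₀) ≤ s n * (x₀ + -b / s n - x₀) := by linarith
      linarith [le_of_mul_le_mul_left h' hsn]
    · convert hbε using 2
      linear_combination -hab

/-- Under universality at scale `s`, all labeled zeros eventually exist, and their consecutive
distances are asymptotic to `1 / s n`. -/
lemma eventually_isNthZero_and_tendsto_gap (hp : ∀ n, p n ≠ 0)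
    (hpos : ∀ n x, 0 < CDKernel p n x x)
    (hCD : ∀ n, ∃ c : ℝ, c ≠ 0 ∧ ∀ x y, CDKernel p n x y * (x - y) =
      c * ((p (n + 1)).eval x * (p n).eval y - (p n).eval x * (p (n + 1)).eval y))
    (hs : ∀ᶠ n in atTop, 0 < s n)
    (huniv : ∀ A : ℝ, 0 < A → TendstoUniformlyOn
      (fun (n : ℕ) (ab : ℝ × ℝ) =>
        CDKernel p n (x₀ + ab.1 / s n) (x₀ + ab.2 / s n) / CDKernel p n x₀ x₀)
      (fun ab => Real.sinc (Real.pi * (ab.2 - ab.1))) atTop (Icc (-A) A ×ˢ Icc (-A) A)) (i : ℤ) :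
    (∀ᶠ n in atTop, IsNthZero (p n) x₀ i (labeledRoot (p n) x₀ i)) ∧
      Tendsto (fun n => s n * (labeledRoot (p n) x₀ (i + 1) - labeledRoot (p n) x₀ i))
        atTop (nhds 1) := by
  have hnb {M ε : ℝ} (hM : 0 ≤ M) (hε0 : 0 < ε) (hε1 : ε < 1) :=
    eventually_exists_neighbors hp hpos hCD hs huniv hM hε0 hε1
  have hzero : ∀ᶠ n in atTop, IsNthZero (p n) x₀ 0 (labeledRoot (p n) x₀ 0) ∧
      |s n * (labeledRoot (p n) x₀ 0 - x₀)| ≤ 2 := by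
    filter_upwards [hnb le_rfl one_half_pos one_half_lt_one] with n hn
    obtain ⟨⟨b, hb, hb2⟩, -⟩ := hn
    rw [labeledRoot_zero, hb.csInf_eq]
    exact ⟨isNthZero_zero_of_isLeast hb, hb2⟩
  have hup (k : ℕ) : ∀ᶠ n in atTop, IsNthZero (p n) x₀ k (labeledRoot (p n) x₀ k) ∧
      |s n * (labeledRoot (p n) x₀ k - x₀)| ≤ 2 + 2 * k := by
    induction k with
    | zero => simpa using hzero
    | succ k ih =>
      filter_upwards [ih, hnb (M := 2 + 2 * k) (by positivity) one_half_pos one_half_lt_one]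
        with n ⟨hr, hM⟩ hn
      obtain ⟨b, hb, hbε⟩ := (hn.2 _ hr.1 hM).1
      have heq : labeledRoot (p n) x₀ (k + 1) = b := by
        rw [labeledRoot_add_one, nextRoot, hb.csInf_eq]
      push_cast
      rw [heq]
      refine ⟨hr.add_one (hp n) (by positivity) hb, ?_⟩
      rw [abs_le] at hM hbε ⊢
      constructor <;> linarith [hM.1, hM.2, hbε.1, hbε.2]
  have hdown (k : ℕ) : ∀ᶠ n in atTop, IsNthZero (p n) x₀ (-k) (labeledRoot (p n) x₀ (-k)) ∧
      |s n * (labeledRoot (p n) x₀ (-k) - x₀)| ≤ 2 + 2 * k := by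
    induction k with
    | zero => simpa using hzero
    | succ k ih =>
      filter_upwards [ih, hnb (M := 2 + 2 * k) (by positivity) one_half_pos one_half_lt_one]
        with n ⟨hr, hM⟩ hn
      obtain ⟨b, hb, hbε⟩ := (hn.2 _ hr.1 hM).2
      have heq : labeledRoot (p n) x₀ (-k - 1) = b := by
        rw [labeledRoot_neg_sub_one, prevRoot, hb.csSup_eq]
      rw [show (-((k + 1 : ℕ) : ℤ)) = -k - 1 by push_cast; ring, heq]
      refine ⟨hr.sub_one (hp n) (by simp) hb, ?_⟩
      push_cast
      rw [abs_le] at hM hbε ⊢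
      constructor <;> linarith [hM.1, hM.2, hbε.1, hbε.2]
  have htendsto {g : ℕ → ℝ} (hg : ∀ ε, 0 < ε → ε < 1 → ∀ᶠ n in atTop, |g n - 1| ≤ ε) :
      Tendsto g atTop (nhds 1) := by
    rw [Metric.tendsto_nhds]
    intro ε hε
    filter_upwards [hg (min (ε / 2) (1 / 2)) (by positivity)
      ((min_le_right _ _).trans_lt one_half_lt_one)] with n hn
    rw [Real.dist_eq]
    exact hn.trans_lt ((min_le_left _ _).trans_lt (half_lt_self hε))
  rcases le_or_gt 0 i with hi | hi
  · lift i to ℕ using hi with k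
    refine ⟨(hup k).mono fun n hn => hn.1, htendsto fun ε hε0 hε1 => ?_⟩
    filter_upwards [hup k, hnb (M := 2 + 2 * k) (by positivity) hε0 hε1] with n ⟨hr, hM⟩ hn
    obtain ⟨b, hb, hbε⟩ := (hn.2 _ hr.1 hM).1
    rwa [labeledRoot_add_one, nextRoot, hb.csInf_eq]
  · obtain ⟨k, rfl⟩ : ∃ k : ℕ, i = -k - 1 := ⟨(-i - 1).toNat, by omega⟩
    refine ⟨?_, htendsto fun ε hε0 hε1 => ?_⟩
    · rw [show (-k - 1 : ℤ) = -((k + 1 : ℕ) : ℤ) by push_cast; ring]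
      exact (hdown (k + 1)).mono fun n hn => hn.1
    · filter_upwards [hdown k, hnb (M := 2 + 2 * k) (by positivity) hε0 hε1] with n ⟨hr, hM⟩ hn
      obtain ⟨b, hb, hbε⟩ := (hn.2 _ hr.1 hM).2
      rwa [sub_add_cancel, labeledRoot_neg_sub_one, prevRoot, hb.csSup_eq]

end Universality

/-- **Weak Freud–Levin Theorem** (Theorem 1.2 of Avila–Last–Simon).  Let `μ` be a probability
measure on `ℝ` with compact infinite support, `p_n` its orthonormal polynomials, `K_n` the CD
kernel, `w = dμ/dx`.  Suppose `x₀ ∈ supp(μ)` is not isolated from the support on either side,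
`w(x₀) > 0`, the zeros of `p_n` are real and simple, `ρ_n = (1/n) w(x₀) K_n(x₀,x₀)` satisfies
`0 < inf ρ_n ≤ sup ρ_n < ∞`, and weak bulk universality holds at `x₀`.  Then quasi-clock
behavior holds at `x₀`: for each `j ∈ ℤ`, the zeros `x_j^{(n)}` (labeled relative to `x₀`) are
defined for large `n` and `(x_{j+1}^{(n)} - x_j^{(n)})/(x_1^{(n)} - x_0^{(n)}) → 1`. -/
theorem stmt_2
    (μ : Measure ℝ) [IsProbabilityMeasure μ]
    (hsupp_cpt : IsCompact (measSupport μ)) (hsupp_inf : (measSupport μ).Infinite)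
    (p : ℕ → Polynomial ℝ)
    (hdeg : ∀ n : ℕ, (p n).natDegree = n)
    (hlead : ∀ n : ℕ, 0 < (p n).leadingCoeff)
    (horth : ∀ n m : ℕ, (∫ x, (p n).eval x * (p m).eval x ∂μ) = if n = m then 1 else 0)
    (hzeros : ∀ n : ℕ, 1 ≤ n → Multiset.card (p n).roots = n ∧ (p n).roots.Nodup)
    (w : ℝ → ℝ) (hw : w = fun x => (μ.rnDeriv volume x).toReal)
    (x₀ : ℝ) (hx₀supp : x₀ ∈ measSupport μ)
    (hacc : ∀ δ : ℝ, 0 < δ →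
      (Ioo (x₀ - δ) x₀ ∩ measSupport μ).Nonempty ∧ (Ioo x₀ (x₀ + δ) ∩ measSupport μ).Nonempty)
    (hwx₀ : 0 < w x₀)
    (ρ : ℕ → ℝ) (hρ : ρ = fun n : ℕ => (1 / n : ℝ) * w x₀ * CDKernel p n x₀ x₀)
    (hρbound : ∃ c Cu : ℝ, 0 < c ∧ ∀ n : ℕ, 1 ≤ n → c ≤ ρ n ∧ ρ n ≤ Cu)
    (huniv : ∀ A : ℝ, 0 < A →
      TendstoUniformlyOn
        (fun (n : ℕ) (ab : ℝ × ℝ) =>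
          CDKernel p n (x₀ + ab.1 / (n * ρ n)) (x₀ + ab.2 / (n * ρ n)) / CDKernel p n x₀ x₀)
        (fun ab => if ab.1 = ab.2 then 1
          else Real.sin (Real.pi * (ab.2 - ab.1)) / (Real.pi * (ab.2 - ab.1)))
        atTop (Icc (-A) A ×ˢ Icc (-A) A)) :
    ∀ j : ℤ, ∃ (N : ℕ) (X : ℕ → ℤ → ℝ),
      (∀ n : ℕ, N ≤ n →
        IsNthZero (p n) x₀ j (X n j) ∧ IsNthZero (p n) x₀ (j + 1) (X n (j + 1)) ∧
        IsNthZero (p n) x₀ 0 (X n 0) ∧ IsNthZero (p n) x₀ 1 (X n 1)) ∧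
      Tendsto (fun n : ℕ => (X n (j + 1) - X n j) / (X n 1 - X n 0)) atTop (nhds 1) := by
  intro j
  obtain ⟨c, Cu, hc, hρc⟩ := hρbound
  have hp (n : ℕ) : p n ≠ 0 := Polynomial.leadingCoeff_ne_zero.1 (hlead n).ne'
  have hs : ∀ᶠ n : ℕ in atTop, 0 < (n : ℝ) * ρ n := by
    filter_upwards [eventually_ge_atTop 1] with n hn
    exact mul_pos (by exact_mod_cast hn) (hc.trans_le (hρc n hn).1)
  have hsinc : (fun ab : ℝ × ℝ => if ab.1 = ab.2 then 1
      else Real.sin (Real.pi * (ab.2 - ab.1)) / (Real.pi * (ab.2 - ab.1))) =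
      fun ab => Real.sinc (Real.pi * (ab.2 - ab.1)) := by
    funext ab
    simp [Real.sinc_apply, Real.pi_ne_zero, sub_eq_zero, eq_comm]
  rw [hsinc] at huniv
  have key := eventually_isNthZero_and_tendsto_gap hp (CDKernel_self_pos hdeg hlead)
    (exists_christoffel_darboux hdeg hlead horth) hs huniv
  obtain ⟨N, hN⟩ := eventually_atTop.1
    ((key j).1.and ((key (j + 1)).1.and ((key 0).1.and (key 1).1)))
  refine ⟨N, fun n => labeledRoot (p n) x₀, hN, ?_⟩
  have hlim := (key j).2.div (key 0).2 one_ne_zero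
  rw [div_one] at hlim
  refine hlim.congr' ?_
  filter_upwards [hs] with n hn
  exact mul_div_mul_left _ _ hn.ne'
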